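/- The function κ(c) + ρ(c) is concave on (0,∞), where κ(c) = 3/(2c·log²c) − (2c+1)/(c(c−1)·log c) + (c+2)/(2(c−1)²) and ρ(c) = 3/(2·log²c) − (c+2)/((c−1)·log c) + (1+2c)/(2(1−c)²), both extended continuously at c = 1. -/

import Mathlib

noncomputable def kappa (c : ℝ) : ℝ :=
  3 / (2 * c * (Real.log c) ^ 2) - (2 * c + 1) / (c * (c - 1) * Real.log c) +
    (c + 2) / (2 * (c - 1) ^ 2)

noncomputable def rho (c : ℝ) : ℝ :=
  3 / (2 * (Real.log c) ^ 2) - (c + 2) / ((c - 1) * Real.log c) +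
    (1 + 2 * c) / (2 * (1 - c) ^ 2)

/-! Away from `c = 1`, the second derivative of `κ + ρ` is `-N(c, log c) / (c³ (log c)⁴ (c - 1)⁴)`
for an integer polynomial `N`. As `f` is continuous and agrees with a meromorphic function off a
point, it is analytic on `(0, ∞)`, and everything reduces to `N(c, log c) ≥ 0`.

With `c = exp t`, this says that the exponential polynomial `E(t) = ∑ₖ pₖ(t) exp(kt)` is nonnegative
on both half-lines. If `g(0) ≥ 0` and `(d/dt - m) g ≥ 0` on `[0, ∞)`, then `g ≥ 0` there. Since
`d/dt - m` lowers the degree of the coefficient of `exp(mt)`, suitable operators of this kind remove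
the negative coefficients one after another, until only nonnegative ones are left.
-/

open Filter Set Topology

theorem eventually_nhdsNE_ne {X : Type*} [TopologicalSpace X] [T1Space X] (a b : X) :
    ∀ᶠ x in 𝓝[≠] a, x ≠ b := by
  rcases eq_or_ne a b with rfl | hab
  · exact self_mem_nhdsWithin
  · exact eventually_ne_nhdsWithin hab

theorem deriv2_nonpos_of_frequently_nhdsNE {f : ℝ → ℝ} {x : ℝ} (hf : AnalyticAt ℝ f x)
    (hf'' : ∃ᶠ y in 𝓝[≠] x, deriv^[2] f y ≤ 0) : deriv^[2] f x ≤ 0 :=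
  le_of_tendsto_of_frequently (hf.deriv.deriv.continuousAt.mono_left nhdsWithin_le_nhds) hf''

theorem concaveOn_of_meromorphicOn_of_frequently_deriv2_nonpos {D : Set ℝ} (hD : Convex ℝ D)
    {f : ℝ → ℝ} (hf : ContinuousOn f D) (hmero : MeromorphicOn f (interior D))
    (hf'' : ∀ x ∈ interior D, ∃ᶠ y in 𝓝[≠] x, deriv^[2] f y ≤ 0) : ConcaveOn ℝ D f := by
  have hanalytic : AnalyticOnNhd ℝ f (interior D) := fun x hx ↦
    (hmero x hx).analyticAt (hf.continuousAt (mem_interior_iff_mem_nhds.1 hx))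
  exact concaveOn_of_deriv2_nonpos hD hf hanalytic.differentiableOn
    hanalytic.deriv.differentiableOn
    fun x hx ↦ deriv2_nonpos_of_frequently_nhdsNE (hanalytic x hx) (hf'' x hx)

theorem nonneg_of_mul_le_deriv_right {f f' : ℝ → ℝ} {m a b : ℝ} (hf : ContinuousOn f (Icc a b))
    (hf' : ∀ x ∈ Ico a b, HasDerivWithinAt f (f' x) (Ici x) x) (ha : 0 ≤ f a)
    (bound : ∀ x ∈ Ico a b, m * f x ≤ f' x) : ∀ x ∈ Icc a b, 0 ≤ f x := by
  intro x hx
  have hgronwall : -f x ≤ gronwallBound 0 m 0 (x - a) :=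
    le_gronwallBound_of_liminf_deriv_right_le hf.neg
      (fun y hy _ hr ↦ (hf' y hy).neg.liminf_right_slope_le hr) (neg_nonpos.2 ha)
      (fun y hy ↦ by simpa using bound y hy) x hx
  rwa [gronwallBound_ε0_δ0, neg_nonpos] at hgronwall

/-- A polynomial with integer coefficients, as the list of its coefficients by increasing degree.
Unlike `Polynomial ℤ`, it is suited to evaluation by the kernel. -/
abbrev CoeffList := List ℤ

namespace CoeffList

/-- The value at a real number of the polynomial with the given coefficients. -/
noncomputable def eval : CoeffList → ℝ → ℝ
  | [], _ => 0
  | a :: p, t => a + t * eval p t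

/-- The sum of two polynomials. -/
def add : CoeffList → CoeffList → CoeffList
  | [], q => q
  | p, [] => p
  | a :: p, b :: q => (a + b) :: add p q

/-- The product of a polynomial by an integer. -/
def smul (m : ℤ) (p : CoeffList) : CoeffList := p.map (m * ·)

/-- The derivative of a polynomial, by the product rule for `a + X p`. -/
def derivative : CoeffList → CoeffList
  | [] => []
  | _ :: p => add p (0 :: derivative p)

/-- The polynomial `p(-X)`. -/
def reflect : CoeffList → CoeffList
  | [] => []
  | a :: p => a :: smul (-1) (reflect p)

theorem eval_add (p q : CoeffList) (t : ℝ) : (add p q).eval t = p.eval t + q.eval t := by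
  induction p generalizing q with
  | nil => simp [add, eval]
  | cons a p ih =>
    cases q with
    | nil => simp [add, eval]
    | cons b q => simp only [add, eval, ih]; push_cast; ring

theorem eval_smul (m : ℤ) (p : CoeffList) (t : ℝ) : (smul m p).eval t = m * p.eval t := by
  induction p with
  | nil => simp [smul, eval]
  | cons a p ih => simp only [smul, List.map_cons, eval] at ih ⊢; rw [ih]; push_cast; ring

theorem eval_reflect (p : CoeffList) (t : ℝ) : p.reflect.eval t = p.eval (-t) := by
  induction p with
  | nil => rfl
  | cons a p ih => simp only [reflect, eval, eval_smul, ih]; push_cast; ring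

theorem hasDerivAt_eval (p : CoeffList) (t : ℝ) : HasDerivAt p.eval (p.derivative.eval t) t := by
  induction p with
  | nil => exact hasDerivAt_const t 0
  | cons a p ih =>
    refine (((hasDerivAt_id' t).fun_mul ih).const_add (a : ℝ)).congr_deriv ?_
    simp only [derivative, eval_add, eval]
    push_cast
    ring

theorem eval_zero (p : CoeffList) : p.eval 0 = (p.headD 0 : ℤ) := by
  cases p <;> simp [eval]

theorem eval_nonneg {p : CoeffList} (hp : ∀ a ∈ p, 0 ≤ a) {t : ℝ} (ht : 0 ≤ t) :
    0 ≤ p.eval t := by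
  induction p with
  | nil => exact le_rfl
  | cons a p ih =>
    rw [List.forall_mem_cons] at hp
    exact add_nonneg (mod_cast hp.1) (mul_nonneg ht (ih hp.2))

end CoeffList

/-- An exponential polynomial `∑ p(t) exp(kt)`, as the list of the pairs `(k, p)`. -/
abbrev ExpPoly := List (ℤ × CoeffList)

namespace ExpPoly

/-- The value of an exponential polynomial at a real number. -/
noncomputable def eval : ExpPoly → ℝ → ℝ
  | [], _ => 0
  | (k, p) :: E, t => Real.exp (k * t) * p.eval t + eval E t

/-- The image of an exponential polynomial under `d/dt - m`. -/
def derivSub (m : ℤ) (E : ExpPoly) : ExpPoly :=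
  E.map fun (k, p) ↦ (k, p.derivative.add (p.smul (k - m)))

/-- The exponential polynomial `t ↦ E(-t)`. -/
def reflect (E : ExpPoly) : ExpPoly := E.map fun (k, p) ↦ (-k, p.reflect)

/-- The value of an exponential polynomial at `0`, which is an integer. -/
def valueAtZero (E : ExpPoly) : ℤ := (E.map fun (_, p) ↦ p.headD 0).sum

/-- Nonnegativity of all coefficients, the evident reason for an exponential polynomial to be
nonnegative on `[0, ∞)`. -/
def NonnegCoeffs (E : ExpPoly) : Prop := ∀ kp ∈ E, ∀ a ∈ kp.2, 0 ≤ a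

/-- A certificate that `E ≥ 0` on `[0, ∞)`: a list of integers `m` such that, when the operators
`d/dt - m` are applied in turn, the value at `0` is nonnegative before each step and all
coefficients are nonnegative in the end. -/
def IsNonnegCertificate : List ℤ → ExpPoly → Prop
  | [], E => E.NonnegCoeffs
  | m :: ms, E => 0 ≤ E.valueAtZero ∧ IsNonnegCertificate ms (E.derivSub m)

instance decidableIsNonnegCertificate :
    ∀ (ms : List ℤ) (E : ExpPoly), Decidable (IsNonnegCertificate ms E)
  | [], E => inferInstanceAs (Decidable (∀ kp ∈ E, ∀ a ∈ kp.2, 0 ≤ a))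
  | m :: ms, E =>
    have := decidableIsNonnegCertificate ms (E.derivSub m)
    inferInstanceAs (Decidable (0 ≤ E.valueAtZero ∧ IsNonnegCertificate ms (E.derivSub m)))

theorem eval_reflect (E : ExpPoly) (t : ℝ) : E.reflect.eval t = E.eval (-t) := by
  induction E with
  | nil => rfl
  | cons kp E ih =>
    simp only [reflect, List.map_cons, eval, CoeffList.eval_reflect] at ih ⊢
    rw [ih]
    simp

theorem hasDerivAt_eval (m : ℤ) (E : ExpPoly) (t : ℝ) :
    HasDerivAt E.eval ((E.derivSub m).eval t + m * E.eval t) t := by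
  induction E with
  | nil => simpa [eval, derivSub] using hasDerivAt_const t (0 : ℝ)
  | cons kp E ih =>
    obtain ⟨k, p⟩ := kp
    have hexp : HasDerivAt (fun x : ℝ ↦ Real.exp (k * x)) (Real.exp (k * t) * (k * 1)) t :=
      ((hasDerivAt_id' t).const_mul (k : ℝ)).exp
    refine ((hexp.fun_mul (p.hasDerivAt_eval t)).fun_add ih).congr_deriv ?_
    simp only [derivSub, List.map_cons, eval, CoeffList.eval_add, CoeffList.eval_smul]
    push_cast
    ring

theorem eval_zero (E : ExpPoly) : E.eval 0 = E.valueAtZero := by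
  induction E with
  | nil => simp [eval, valueAtZero]
  | cons kp E ih =>
    simp only [valueAtZero, List.map_cons, List.sum_cons, eval, CoeffList.eval_zero] at ih ⊢
    rw [ih]
    simp

theorem eval_nonneg_of_nonnegCoeffs {E : ExpPoly} (hE : E.NonnegCoeffs) {t : ℝ} (ht : 0 ≤ t) :
    0 ≤ E.eval t := by
  induction E with
  | nil => exact le_rfl
  | cons kp E ih =>
    obtain ⟨hp, hE⟩ := List.forall_mem_cons.1 hE
    exact add_nonneg (mul_nonneg (Real.exp_pos _).le (CoeffList.eval_nonneg hp ht)) (ih hE)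

theorem eval_nonneg_of_derivSub {E : ExpPoly} {m : ℤ} (h0 : 0 ≤ E.valueAtZero)
    (hderiv : ∀ t : ℝ, 0 ≤ t → 0 ≤ (E.derivSub m).eval t) {t : ℝ} (ht : 0 ≤ t) : 0 ≤ E.eval t := by
  refine nonneg_of_mul_le_deriv_right (m := m)
    (fun x _ ↦ (E.hasDerivAt_eval m x).continuousAt.continuousWithinAt)
    (fun x _ ↦ (E.hasDerivAt_eval m x).hasDerivWithinAt) ?_ (fun x hx ↦ ?_) t (right_mem_Icc.2 ht)
  · rw [eval_zero]
    exact_mod_cast h0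
  · linarith [hderiv x hx.1]

theorem IsNonnegCertificate.eval_nonneg {ms : List ℤ} {E : ExpPoly} (h : IsNonnegCertificate ms E)
    {t : ℝ} (ht : 0 ≤ t) : 0 ≤ E.eval t := by
  induction ms generalizing E t with
  | nil => exact eval_nonneg_of_nonnegCoeffs h ht
  | cons m ms ih => exact eval_nonneg_of_derivSub h.1 (fun _ hs ↦ ih h.2 hs) ht

end ExpPoly

/-- The polynomial `N` for which the second derivative of `κ + ρ` at `c` is
`-N(c, log c) / (c³ (log c)⁴ (c - 1)⁴)`. -/
def concavityNumerator (c L : ℝ) : ℝ :=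
  -9 * (c + 1) * (c - 1) ^ 4 - (c ^ 2 - 2 * c - 11) * (c - 1) ^ 3 * L
    + (c ^ 3 + 10 * c ^ 2 + 7 * c - 6) * (c - 1) ^ 2 * L ^ 2
    + 2 * (5 * c ^ 3 + 3 * c ^ 2 - 3 * c + 1) * (c - 1) * L ^ 3 - 3 * c ^ 3 * (c + 5) * L ^ 4

/-- The exponential polynomial `t ↦ concavityNumerator (exp t) t`. -/
def concavityExpPoly : ExpPoly :=
  [(0, [-9, -11, -6, -2]), (1, [27, 31, 19, 8]), (2, [-18, -26, -10, -12]),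
    (3, [-18, 2, -12, -4, -15]), (4, [27, 5, 8, 10, -3]), (5, [-9, -1, 1])]

theorem eval_concavityExpPoly (t : ℝ) :
    concavityExpPoly.eval t = concavityNumerator (Real.exp t) t := by
  have hexp (k : ℤ) : Real.exp (k * t) = Real.exp t ^ k := by
    rw [mul_comm, Real.exp_mul, Real.rpow_intCast]
  simp only [concavityExpPoly, ExpPoly.eval, CoeffList.eval, concavityNumerator, hexp,
    zpow_ofNat]
  push_cast
  ring

-- This list and the next one were found by a computer search for short certificates.
theorem isNonnegCertificate_concavityExpPoly :
    ExpPoly.IsNonnegCertificate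
      (.replicate 6 (-3) ++ .replicate 12 0 ++ .replicate 3 2 ++ .replicate 2 3 ++ .replicate 5 4)
      concavityExpPoly := by
  decide +kernel

theorem isNonnegCertificate_reflect_concavityExpPoly :
    ExpPoly.IsNonnegCertificate [0, -1, -2, -3, -3, -4, -4, -4, -5, -5, -5]
      concavityExpPoly.reflect := by
  decide +kernel

theorem eval_concavityExpPoly_nonneg (t : ℝ) : 0 ≤ concavityExpPoly.eval t := by
  rcases le_total 0 t with ht | ht
  · exact isNonnegCertificate_concavityExpPoly.eval_nonneg ht
  · simpa [ExpPoly.eval_reflect] using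
      isNonnegCertificate_reflect_concavityExpPoly.eval_nonneg (neg_nonneg.2 ht)

theorem concavityNumerator_log_nonneg {c : ℝ} (hc : 0 < c) :
    0 ≤ concavityNumerator c (Real.log c) := by
  simpa only [eval_concavityExpPoly, Real.exp_log hc] using
    eval_concavityExpPoly_nonneg (Real.log c)

theorem kappa_add_rho_eq_div {c : ℝ} (hc : 0 < c) (hc1 : c ≠ 1) :
    kappa c + rho c =
      (3 * (c + 1) * (c - 1) ^ 2 - 2 * (c ^ 2 + 4 * c + 1) * (c - 1) * Real.log c
        + 3 * c * (c + 1) * Real.log c ^ 2) / (2 * c * Real.log c ^ 2 * (c - 1) ^ 2) := by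
  have hlog : Real.log c ≠ 0 := Real.log_ne_zero_of_pos_of_ne_one hc hc1
  have hsub : c - 1 ≠ 0 := sub_ne_zero.2 hc1
  rw [kappa, rho, ← neg_sub c 1, neg_sq]
  field_simp
  ring

/-- The derivative of `κ + ρ` on `(0, ∞) \ {1}`. -/
noncomputable def kappaAddRhoDeriv (c : ℝ) : ℝ :=
  (-6 * (c + 1) * (c - 1) ^ 3 + (2 * c ^ 2 + 5 * c + 5) * (c - 1) ^ 2 * Real.log c
    + (10 * c ^ 2 + 4 * c - 2) * (c - 1) * Real.log c ^ 2
    - 3 * c ^ 2 * (c + 3) * Real.log c ^ 3) / (2 * c ^ 2 * Real.log c ^ 3 * (c - 1) ^ 3)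

theorem hasDerivAt_kappa_add_rho {c : ℝ} (hc : 0 < c) (hc1 : c ≠ 1) :
    HasDerivAt (kappa + rho) (kappaAddRhoDeriv c) c := by
  have hlog : Real.log c ≠ 0 := Real.log_ne_zero_of_pos_of_ne_one hc hc1
  have hsub : c - 1 ≠ 0 := sub_ne_zero.2 hc1
  have hX := hasDerivAt_id' c
  have hD := hX.sub_const 1
  have hL := Real.hasDerivAt_log hc.ne'
  have hterm₀ := ((hX.add_const 1).const_mul 3).fun_mul (hD.fun_pow 2)
  have hterm₁ := (((((hX.fun_pow 2).fun_add (hX.const_mul 4)).add_const 1).const_mul 2).fun_mul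
    hD).fun_mul hL
  have hterm₂ := ((hX.const_mul 3).fun_mul (hX.add_const 1)).fun_mul (hL.fun_pow 2)
  have hnum := (hterm₀.fun_sub hterm₁).fun_add hterm₂
  have hden := ((hX.const_mul 2).fun_mul (hL.fun_pow 2)).fun_mul (hD.fun_pow 2)
  refine ((hnum.fun_div hden (by positivity)).congr_of_eventuallyEq ?_).congr_deriv ?_
  · filter_upwards [lt_mem_nhds hc, eventually_ne_nhds hc1] with x hx hx1
    exact kappa_add_rho_eq_div hx hx1
  · rw [kappaAddRhoDeriv]
    push_cast
    field_simp
    ring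

theorem hasDerivAt_kappaAddRhoDeriv {c : ℝ} (hc : 0 < c) (hc1 : c ≠ 1) :
    HasDerivAt kappaAddRhoDeriv
      (-(concavityNumerator c (Real.log c) / (c ^ 3 * Real.log c ^ 4 * (c - 1) ^ 4))) c := by
  have hlog : Real.log c ≠ 0 := Real.log_ne_zero_of_pos_of_ne_one hc hc1
  have hsub : c - 1 ≠ 0 := sub_ne_zero.2 hc1
  have hX := hasDerivAt_id' c
  have hD := hX.sub_const 1
  have hL := Real.hasDerivAt_log hc.ne'
  have hterm₀ := ((hX.add_const 1).const_mul (-6)).fun_mul (hD.fun_pow 3)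
  have hterm₁ := (((((hX.fun_pow 2).const_mul 2).fun_add (hX.const_mul 5)).add_const 5).fun_mul
    (hD.fun_pow 2)).fun_mul hL
  have hterm₂ := (((((hX.fun_pow 2).const_mul 10).fun_add (hX.const_mul 4)).sub_const 2).fun_mul
    hD).fun_mul (hL.fun_pow 2)
  have hterm₃ := (((hX.fun_pow 2).const_mul 3).fun_mul (hX.add_const 3)).fun_mul (hL.fun_pow 3)
  have hnum := ((hterm₀.fun_add hterm₁).fun_add hterm₂).fun_sub hterm₃
  have hden := (((hX.fun_pow 2).const_mul 2).fun_mul (hL.fun_pow 3)).fun_mul (hD.fun_pow 3)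
  refine (hnum.fun_div hden (by positivity)).congr_deriv ?_
  rw [concavityNumerator]
  push_cast
  field_simp
  ring

theorem deriv2_kappa_add_rho_nonpos {c : ℝ} (hc : 0 < c) (hc1 : c ≠ 1) :
    deriv^[2] (kappa + rho) c ≤ 0 := by
  have hderiv : deriv (kappa + rho) =ᶠ[𝓝 c] kappaAddRhoDeriv := by
    filter_upwards [lt_mem_nhds hc, eventually_ne_nhds hc1] with x hx hx1
    exact (hasDerivAt_kappa_add_rho hx hx1).deriv
  calc deriv^[2] (kappa + rho) c
      = -(concavityNumerator c (Real.log c) / (c ^ 3 * Real.log c ^ 4 * (c - 1) ^ 4)) :=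
        hderiv.deriv_eq.trans (hasDerivAt_kappaAddRhoDeriv hc hc1).deriv
    _ ≤ 0 := by
        have hnum := concavityNumerator_log_nonneg hc
        exact neg_nonpos.2 (by positivity)

theorem meromorphicAt_kappa_add_rho {c : ℝ} (hc : 0 < c) : MeromorphicAt (kappa + rho) c := by
  have hlog : MeromorphicAt Real.log c := (analyticAt_log hc).meromorphicAt
  unfold kappa rho
  fun_prop

theorem stmt_15 (f : ℝ → ℝ) (hcont : ContinuousOn f (Set.Ioi (0:ℝ)))
    (hf : ∀ c : ℝ, 0 < c → c ≠ 1 → f c = kappa c + rho c) :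
    ConcaveOn ℝ (Set.Ioi (0:ℝ)) f := by
  have hgeneric {c : ℝ} (hc : 0 < c) : ∀ᶠ x in 𝓝[≠] c, 0 < x ∧ x ≠ 1 :=
    (eventually_nhdsWithin_of_eventually_nhds (lt_mem_nhds hc)).and (eventually_nhdsNE_ne c 1)
  have hfeq {c : ℝ} (hc : 0 < c) : f =ᶠ[𝓝[≠] c] kappa + rho :=
    (hgeneric hc).mono fun x hx ↦ hf x hx.1 hx.2
  refine concaveOn_of_meromorphicOn_of_frequently_deriv2_nonpos (convex_Ioi 0) hcont ?_ ?_ <;>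
    rw [interior_Ioi]
  · exact fun c hc ↦ (meromorphicAt_kappa_add_rho hc).congr (hfeq hc).symm
  · intro c hc
    apply Eventually.frequently
    filter_upwards [hgeneric hc, (hfeq hc).nhdsNE_deriv.nhdsNE_deriv] with x hx hderiv2
    exact hderiv2.trans_le (deriv2_kappa_add_rho_nonpos hx.1 hx.2)
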